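/- A C*-algebra that is reflexive as a Banach space is finite-dimensional. -/

import Mathlib

/-!
The proof compares `A` with a maximal commutative C⋆-subalgebra `B`, which Gelfand duality
identifies with `C(X, ℂ)` for a compact Hausdorff space `X`.

*`X` is finite.* Otherwise `X` carries infinitely many bump functions of height `1` with pairwise
disjoint supports, hence `A` contains a sequence `e n` with `e m * e n = 0` for `m ≠ n`, with
partial sums bounded by `1` and `‖e n * e n‖ ≥ 1` (so the closed span of the `e n` is a copy of
`c₀`). By Banach–Alaoglu the partial sums have a weak-⋆ limit point in the bidual, which by
reflexivity is some `x : A`. Multiplying by `e k` gives `x * e k = e k * e k`, of norm at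
least `1`; but `x` lies in the closed span of the `e n` by Hahn–Banach, which forces `x * e k → 0`
(`not_reflexive_of_orthogonal`).

*`A` is finite-dimensional.* The points of the finite discrete space `X` give projections `p i ∈ B`
with sum `1`. Each `p i * a * p i` commutes with `B`, so it belongs to `B` and is a multiple of
`p i`. If `v = p i * a * p j ≠ 0`, then `v * star v` is a nonzero multiple of `p i`, and
expanding `v * star v * (p i * b * p j)` shows that every `p i * b * p j` is a multiple of `v`.
Hence `A = ∑ p i * A * p j` is a finite sum of subspaces of dimension at most one
(`finiteDimensional_of_corners`).
-/

open Filter Topology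

namespace ReflexiveCStar

/-- The weak-⋆ limit point is taken along a nonprincipal ultrafilter, so that it is an honest limit
of the numbers `f (s n)` for all functionals `f` simultaneously. -/
lemma exists_weak_limit {E : Type*} [NormedAddCommGroup E] [NormedSpace ℂ E]
    (hrefl : Function.Surjective (NormedSpace.inclusionInDoubleDual ℂ E))
    (s : ℕ → E) (hs : ∀ n, ‖s n‖ ≤ 1) :
    ∃ x : E, ∀ f : StrongDual ℂ E,
      Tendsto (fun n => f (s n)) (hyperfilter ℕ : Filter ℕ) (𝓝 (f x)) := by
  let J : ℕ → WeakDual ℂ (StrongDual ℂ E) := fun n =>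
    StrongDual.toWeakDual (NormedSpace.inclusionInDoubleDual ℂ E (s n))
  have hK := WeakDual.isCompact_closedBall (𝕜 := ℂ) (E := StrongDual ℂ E) 0 1
  have hJ : Tendsto J (hyperfilter ℕ : Filter ℕ)
      (𝓟 (WeakDual.toStrongDual ⁻¹' Metric.closedBall (0 : StrongDual ℂ (StrongDual ℂ E)) 1)) := by
    refine tendsto_principal.2 (Eventually.of_forall fun n => ?_)
    have h : ‖NormedSpace.inclusionInDoubleDual ℂ E (s n)‖ ≤ 1 :=
      (NormedSpace.double_dual_bound ℂ E (s n)).trans (hs n)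
    exact (@mem_closedBall_zero_iff (StrongDual ℂ (StrongDual ℂ E)) _ _ _).2 h
  obtain ⟨Φ, -, hΦ⟩ := hK.ultrafilter_le_nhds ((hyperfilter ℕ).map J) hJ
  obtain ⟨x, hx⟩ := hrefl (WeakDual.toStrongDual Φ)
  refine ⟨x, fun f => ?_⟩
  have h1 : Tendsto (fun n => J n f) (hyperfilter ℕ : Filter ℕ) (𝓝 (Φ f)) :=
    ((WeakDual.eval_continuous f).tendsto Φ).comp hΦ
  have h2 : Φ f = f x := by
    rw [← NormedSpace.dual_def ℂ E x f, hx]; rfl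
  rw [h2] at h1
  exact h1

lemma not_reflexive_of_orthogonal {A : Type*} [NormedRing A] [NormedAlgebra ℂ A]
    (hrefl : Function.Surjective (NormedSpace.inclusionInDoubleDual ℂ A))
    (e : ℕ → A) (horth : ∀ m n, m ≠ n → e m * e n = 0)
    (hsum : ∀ n, ‖∑ i ∈ Finset.range n, e i‖ ≤ 1)
    (hle : ∀ n, ‖e n‖ ≤ 1) (hge : ∀ n, 1 ≤ ‖e n * e n‖) : False := by
  obtain ⟨x, hx⟩ := exists_weak_limit hrefl (fun n => ∑ i ∈ Finset.range n, e i) hsum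
  have hxe : ∀ k, x * e k = e k * e k := by
    intro k
    refine (SeparatingDual.eq_iff_forall_dual_eq (R := ℂ)).2 fun f => ?_
    let g : StrongDual ℂ A := f.comp ((ContinuousLinearMap.mul ℂ A).flip (e k))
    refine tendsto_nhds_unique (hx g) (tendsto_const_nhds.congr' ?_)
    have : ∀ᶠ n in (hyperfilter ℕ : Filter ℕ), k < n :=
      (Nat.hyperfilter_le_atTop) (eventually_gt_atTop k)
    filter_upwards [this] with n hn
    change _ = f ((∑ i ∈ Finset.range n, e i) * e k)
    rw [Finset.sum_mul, Finset.sum_eq_single_of_mem k (Finset.mem_range.2 hn)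
      (fun i _ hik => horth i k hik)]
  let M : Submodule ℂ A := Submodule.span ℂ (Set.range e)
  have hmem : x ∈ closure (M : Set A) := by
    by_contra hxM
    obtain ⟨f, u, h1, h2⟩ := RCLike.geometric_hahn_banach_closed_point (𝕜 := ℂ)
      ((M.restrictScalars ℝ).convex.closure) isClosed_closure hxM
    refine absurd (le_of_tendsto ((RCLike.continuous_re.tendsto _).comp (hx f))
      (Eventually.of_forall fun n => (h1 _ (subset_closure ?_)).le)) (not_le.2 h2)
    exact M.sum_mem fun i _ => Submodule.subset_span ⟨i, rfl⟩
  obtain ⟨y, hyM, hy⟩ := Metric.mem_closure_iff.1 hmem 1 one_pos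
  have hann : ∀ z ∈ M, ∃ N, ∀ k ≥ N, z * e k = 0 := by
    intro z hz
    induction hz using Submodule.span_induction with
    | mem z hz =>
      obtain ⟨i, rfl⟩ := hz
      exact ⟨i + 1, fun k hk => horth i k (by omega)⟩
    | zero => exact ⟨0, by simp⟩
    | add a b _ _ ha hb =>
      obtain ⟨N, hN⟩ := ha
      obtain ⟨N', hN'⟩ := hb
      exact ⟨max N N', fun k hk => by
        rw [add_mul, hN k (le_of_max_le_left hk), hN' k (le_of_max_le_right hk), add_zero]⟩
    | smul c a _ ha =>
      obtain ⟨N, hN⟩ := ha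
      exact ⟨N, fun k hk => by rw [smul_mul_assoc, hN k hk, smul_zero]⟩
  obtain ⟨N, hN⟩ := hann y hyM
  have h3 : e N * e N = (x - y) * e N := by rw [sub_mul, hN N le_rfl, sub_zero, hxe]
  have h4 := hge N
  rw [h3] at h4
  rw [dist_eq_norm] at hy
  have h5 := norm_mul_le (x - y) (e N)
  nlinarith [hle N, norm_nonneg (x - y), norm_nonneg (e N)]

lemma exists_orthogonal_bumps (X : Type*) [TopologicalSpace X] [CompactSpace X] [T2Space X]
    [Infinite X] : ∃ f : ℕ → C(X, ℂ), (∀ m n, m ≠ n → f m * f n = 0) ∧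
      (∀ n, ‖∑ i ∈ Finset.range n, f i‖ ≤ 1) ∧ (∀ n, ‖f n‖ ≤ 1) ∧
      ∀ n, 1 ≤ ‖f n * f n‖ := by
  obtain ⟨U, hUi, hUo, hUd⟩ := exists_seq_infinite_isOpen_pairwise_disjoint X
  choose x hx using fun n => (hUi n).nonempty
  have hex : ∀ n, ∃ f : C(X, ℂ), (∀ y ∉ U n, f y = 0) ∧ f (x n) = 1 ∧ ∀ y, ‖f y‖ ≤ 1 := by
    intro n
    obtain ⟨g, hg0, hg1, hg⟩ := exists_continuous_zero_one_of_isClosed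
      (hUo n).isClosed_compl (isClosed_singleton (x := x n))
      (Set.disjoint_singleton_right.2 fun h => h (hx n))
    refine ⟨⟨fun y => (g y : ℂ), by fun_prop⟩, fun y hy => ?_, ?_, fun y => ?_⟩
    · simpa using hg0 hy
    · simpa using hg1 (Set.mem_singleton _)
    · simpa [abs_of_nonneg (hg y).1] using (hg y).2
  choose f hf0 hf1 hf using hex
  have hdisj : ∀ m n, m ≠ n → ∀ y ∈ U n, f m y = 0 := fun m n hmn y hy =>
    hf0 m y fun hy' => Set.disjoint_left.1 (hUd hmn) hy' hy
  refine ⟨f, fun m n hmn => ?_, fun n => ?_, fun n => ?_, fun n => ?_⟩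
  · ext y
    by_cases hy : y ∈ U n
    · simp [hdisj m n hmn y hy]
    · simp [hf0 n y hy]
  · refine (ContinuousMap.norm_le _ zero_le_one).2 fun y => ?_
    rw [ContinuousMap.sum_apply]
    by_cases hy : ∃ k ∈ Finset.range n, y ∈ U k
    · obtain ⟨k, hk, hy⟩ := hy
      rw [Finset.sum_eq_single_of_mem k hk fun i _ hik => hdisj i k hik y hy]
      exact hf k y
    · push Not at hy
      rw [Finset.sum_eq_zero fun i hi => hf0 i y (hy i hi)]
      simp
  · exact (ContinuousMap.norm_le _ zero_le_one).2 (hf n)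
  · simpa [hf1] using (f n * f n).norm_coe_le_norm (x n)

/-- A maximal commutative star subalgebra, characterised as one that equals its own commutant. -/
lemma exists_maximal_commutative (A : Type*) [CStarAlgebra A] :
    ∃ B : StarSubalgebra ℂ A, IsClosed (B : Set A) ∧
      ∀ z : A, z ∈ B ↔ ∀ b ∈ B, b * z = z * b := by
  let F : Set (Set A) := {S | (∀ a ∈ S, star a ∈ S) ∧ ∀ a ∈ S, ∀ b ∈ S, a * b = b * a}
  obtain ⟨S, hS⟩ := zorn_subset F (by
    intro c hc hchain
    refine ⟨⋃₀ c, ⟨?_, ?_⟩, fun s hs => Set.subset_sUnion_of_mem hs⟩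
    · rintro a ⟨s, hs, ha⟩
      exact ⟨s, hs, (hc hs).1 a ha⟩
    · rintro a ⟨s, hs, ha⟩ b ⟨t, ht, hb⟩
      rcases hchain.total hs ht with h | h
      · exact (hc ht).2 a (h ha) b hb
      · exact (hc hs).2 a ha b (h hb))
  have hstar := hS.prop.1
  have hcomm := hS.prop.2
  let B := StarSubalgebra.centralizer ℂ S
  have hB : ∀ z : A, z ∈ B ↔ ∀ g ∈ S, g * z = z * g := fun z => by
    rw [StarSubalgebra.mem_centralizer_iff]
    exact ⟨fun h g hg => (h g hg).1, fun h g hg => ⟨h g hg, h _ (hstar g hg)⟩⟩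
  have hSB : ∀ a ∈ S, a ∈ B := fun a ha => (hB a).2 fun g hg => hcomm g hg a ha
  have hsa : ∀ z ∈ B, IsSelfAdjoint z → z ∈ S := by
    intro z hz hzs
    have hz' := (hB z).1 hz
    refine hS.le_of_ge (y := insert z S) ⟨?_, ?_⟩ (Set.subset_insert _ _) (Set.mem_insert _ _)
    · rintro a (rfl | ha)
      · rw [hzs.star_eq]; exact Set.mem_insert _ _
      · exact Set.mem_insert_of_mem _ (hstar a ha)
    · rintro a (rfl | ha) b (rfl | hb)
      · rfl
      · exact (hz' b hb).symm
      · exact hz' a ha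
      · exact hcomm a ha b hb
  refine ⟨B, ?_, fun z => ⟨fun hz b hb => ?_, fun h => (hB z).2 fun g hg => h g (hSB g hg)⟩⟩
  · have : (B : Set A) = S.centralizer := by
      ext z; exact hB z
    rw [this]
    exact Set.isClosed_centralizer _
  -- The real and imaginary parts of `b` belong to `S`, and `z` commutes with `S`.
  · have hbs : star b ∈ B := star_mem hb
    have hre : ((realPart b : A)) ∈ S := by
      refine hsa _ ?_ (realPart b).2
      rw [realPart_apply_coe]
      exact (B.toSubalgebra.toSubmodule.restrictScalars ℝ).smul_mem _ (add_mem hb hbs)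
    have him : ((imaginaryPart b : A)) ∈ S := by
      refine hsa _ ?_ (imaginaryPart b).2
      rw [imaginaryPart_apply_coe]
      exact B.smul_mem ((B.toSubalgebra.toSubmodule.restrictScalars ℝ).smul_mem _
        (sub_mem hb hbs)) _
    have h1 := (hB z).1 hz _ hre
    have h2 := (hB z).1 hz _ him
    rw [← realPart_add_I_smul_imaginaryPart b, add_mul, mul_add, h1, smul_mul_assoc, h2,
      mul_smul_comm]

/-- The algebraic half: a finite resolution of `1` into self-adjoint idempotents with scalar
diagonal corners makes all corners at most one-dimensional. -/
lemma finiteDimensional_of_corners {A ι : Type*} [CStarAlgebra A] [Fintype ι] (p : ι → A)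
    (hstar : ∀ i, star (p i) = p i) (hidem : ∀ i, p i * p i = p i) (hone : ∑ i, p i = 1)
    (hcorner : ∀ i a, ∃ c : ℂ, p i * a * p i = c • p i) : FiniteDimensional ℂ A := by
  have key : ∀ i j, ∃ v : A, ∀ b, ∃ d : ℂ, p i * b * p j = d • v := by
    intro i j
    by_cases h : ∀ a, p i * a * p j = 0
    · exact ⟨0, fun b => ⟨0, by rw [h, smul_zero]⟩⟩
    push Not at h
    obtain ⟨a, ha⟩ := h
    refine ⟨p i * a * p j, fun b => ?_⟩
    obtain ⟨c, hc⟩ := hcorner i (a * p j * star a)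
    obtain ⟨d, hd⟩ := hcorner j (star a * p i * b)
    have hvv : (p i * a * p j) * star (p i * a * p j) = c • p i := by
      rw [← hc]
      simp only [star_mul, hstar, mul_assoc]
      rw [← mul_assoc (p j) (p j), hidem]
    have hc0 : c ≠ 0 := by
      rintro rfl
      rw [zero_smul] at hvv
      exact ha (CStarRing.mul_star_self_eq_zero_iff _ |>.1 hvv)
    refine ⟨c⁻¹ * d, ?_⟩
    have h1 : c • (p i * b * p j) = d • (p i * a * p j) := by
      calc c • (p i * b * p j) = (c • p i) * b * p j := by simp only [smul_mul_assoc]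
        _ = p i * a * (p j * (star a * p i * b) * p j) := by
            rw [← hc]
            simp only [mul_assoc]
        _ = d • (p i * a * p j) := by rw [hd, mul_smul_comm]
    rw [mul_smul, ← h1, inv_smul_smul₀ hc0]
  choose v hv using key
  have htop : Submodule.span ℂ (Set.range fun q : ι × ι => v q.1 q.2) = ⊤ := by
    refine eq_top_iff.2 fun b _ => ?_
    have hb : b = ∑ i, ∑ j, p i * b * p j := by
      simp_rw [← Finset.mul_sum, ← Finset.sum_mul, hone, one_mul, mul_one]
    rw [hb]
    refine Submodule.sum_mem _ fun i _ => Submodule.sum_mem _ fun j _ => ?_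
    obtain ⟨d, hd⟩ := hv i j b
    rw [hd]
    exact Submodule.smul_mem _ _ (Submodule.subset_span ⟨(i, j), rfl⟩)
  exact Module.Finite.of_fg_top (htop ▸ Submodule.fg_span (Set.finite_range _))

theorem finiteDimensional {A : Type*} [CStarAlgebra A]
    (hrefl : Function.Surjective (NormedSpace.inclusionInDoubleDual ℂ A)) :
    FiniteDimensional ℂ A := by
  obtain ⟨B, hBc, hB⟩ := exists_maximal_commutative A
  let iB : CStarAlgebra B := StarSubalgebra.cstarAlgebra B (h_closed := hBc)
  let : CommCStarAlgebra B :=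
    { iB with mul_comm := fun a b => Subtype.ext ((hB b).1 b.2 a a.2) }
  let X := WeakDual.characterSpace ℂ B
  let G : B ≃⋆ₐ[ℂ] C(X, ℂ) := gelfandStarTransform B
  have hGn : ∀ f : C(X, ℂ), ‖((G.symm f : B) : A)‖ = ‖f‖ := by
    intro f
    have := (gelfandTransform_isometry B).norm_map_of_map_zero (map_zero _) (G.symm f)
    have h2 : WeakDual.gelfandTransform ℂ B (G.symm f) = f := G.apply_symm_apply f
    rw [h2] at this
    exact this.symm
  have hfin : Finite X := by
    by_contra hinf
    rw [not_finite_iff_infinite] at hinf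
    obtain ⟨f, h1, h2, h3, h4⟩ := exists_orthogonal_bumps X
    refine not_reflexive_of_orthogonal hrefl (fun n => ((G.symm (f n) : B) : A))
      (fun m n hmn => ?_) (fun n => ?_) (fun n => ?_) (fun n => ?_)
    · rw [← MulMemClass.coe_mul, ← map_mul, h1 m n hmn, map_zero, ZeroMemClass.coe_zero]
    · rw [← AddSubmonoidClass.coe_finsetSum, ← map_sum, hGn]
      exact h2 n
    · rw [hGn]; exact h3 n
    · rw [← MulMemClass.coe_mul, ← map_mul, hGn]; exact h4 n
  have := Fintype.ofFinite X
  classical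
  let δ : X → C(X, ℂ) := fun x => ⟨Pi.single x 1, continuous_of_discreteTopology⟩
  have hδ : ∀ x y, δ x y = if y = x then 1 else 0 := fun x y => Pi.single_apply x 1 y
  have hmul : ∀ x (f : C(X, ℂ)), δ x * f = f x • δ x := by
    intro x f
    ext y
    by_cases h : y = x <;> simp [hδ, h]
  have hpb : ∀ x, ∀ b : B, ∃ c : ℂ, G.symm (δ x) * b = c • G.symm (δ x) := by
    intro x b
    refine ⟨G b x, ?_⟩
    rw [← map_smul, ← hmul, map_mul, G.symm_apply_apply]
  refine finiteDimensional_of_corners (fun x => ((G.symm (δ x) : B) : A)) (fun x => ?_)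
    (fun x => ?_) ?_ (fun x a => ?_)
  · rw [← StarMemClass.coe_star, ← map_star]
    congr 2
    ext y
    by_cases h : y = x <;> simp [hδ, h]
  · rw [← MulMemClass.coe_mul, ← map_mul, hmul]
    simp [hδ]
  · rw [← AddSubmonoidClass.coe_finsetSum, ← map_sum]
    have : ∑ x, δ x = 1 := by
      ext y
      simp [ContinuousMap.sum_apply, hδ]
    rw [this, map_one, OneMemClass.coe_one]
  · set P : B := G.symm (δ x) with hP
    have hPP : (P : A) * P = P := by
      rw [← MulMemClass.coe_mul, hP, ← map_mul, hmul]
      simp [hδ]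
    have hmem : (P : A) * a * P ∈ B := by
      refine (hB _).2 fun b hb => ?_
      obtain ⟨c, hc⟩ := hpb x ⟨b, hb⟩
      have h1 : (P : A) * b = c • (P : A) := congrArg Subtype.val hc
      have h2 : b * (P : A) = c • (P : A) := by rw [← h1]; exact (hB P).1 P.2 b hb
      rw [mul_assoc (P * a : A), h1, ← mul_assoc, ← mul_assoc, h2]
      simp only [smul_mul_assoc, mul_smul_comm]
    obtain ⟨c, hc⟩ := hpb x ⟨_, hmem⟩
    refine ⟨c, ?_⟩
    have h1 : (P : A) * (P * a * P) = c • (P : A) := congrArg Subtype.val hc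
    rwa [← mul_assoc, ← mul_assoc, hPP] at h1

end ReflexiveCStar


/-- A C*-algebra that is reflexive as a Banach space (the canonical
embedding into its double dual is surjective) is finite-dimensional. Consequently, a
Banach space which is isomorphic to a Hilbert space and to a reflexive C*-algebra is
finite-dimensional. -/
theorem cstarAlgebra_reflexive_finiteDimensional
    (A : Type*) [NormedRing A] [StarRing A] [CStarRing A]
    [NormedAlgebra ℂ A] [StarModule ℂ A] [CompleteSpace A]
    (hrefl : Function.Surjective (NormedSpace.inclusionInDoubleDual ℂ A)) :
    FiniteDimensional ℂ A := by
  let : CStarAlgebra A := {}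
  exact ReflexiveCStar.finiteDimensional hrefl
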